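/- arXiv:2304.03809 — 4 statements merged into one kernel-verified Lean document; each statement's English description precedes it below -/
import Mathlib

section
/- Let π be a probability measure on [0,1]^p, let C₀* > 0, and let f, f₀ : [0,1]^p → ℝ be measurable functions with ‖f‖_∞ ≤ C₀* and ‖f₀‖_∞ ≤ C₀*. Then for every subset P ⊆ {1, …, p}, |c_{P,π}(f) − c_{P,π}(f₀)| ≤ 4C₀* · ‖f − f₀‖_{L²(π)}. -/
open MeasureTheory

/-- The unit hypercube `[0,1]^p`. -/
abbrev UnitCube (p : ℕ) := Fin p → Set.Icc (0 : ℝ) 1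

/-- The sub-σ-algebra of `[0,1]^p` generated by the projection onto the coordinates in `P`. -/
def coordSubAlg (p : ℕ) (P : Finset (Fin p)) : MeasurableSpace (UnitCube p) :=
  MeasurableSpace.comap (fun x (i : P) => x i) MeasurableSpace.pi

/-- The cost functional `c_{P,π}(g) = E[(E[g(X) | X_P])²] - (E[g(X)])²` for `X ∼ π`,
with `c_{∅,π}(g) := 0`. -/
noncomputable def cost {p : ℕ} (π : Measure (UnitCube p)) (P : Finset (Fin p))
    (g : UnitCube p → ℝ) : ℝ :=
  if P = ∅ then 0 else
    (∫ x, ((π[g | coordSubAlg p P]) x) ^ 2 ∂π) - (∫ x, g x ∂π) ^ 2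

/-- Theorem 1 of the paper. If `f, f₀ : [0,1]^p → ℝ` are measurable and
bounded in supremum norm by `C₀* > 0`, then for every subset `P ⊆ [p]`,
`|c_{P,π}(f) - c_{P,π}(f₀)| ≤ 4 C₀* ‖f - f₀‖_{L²(π)}`. -/
theorem stmt4 {p : ℕ} (π : Measure (UnitCube p)) [IsProbabilityMeasure π]
    (C₀ : ℝ) (hC₀ : 0 < C₀)
    (f f₀ : UnitCube p → ℝ) (hf : Measurable f) (hf₀ : Measurable f₀)
    (hfb : ∀ x, |f x| ≤ C₀) (hf₀b : ∀ x, |f₀ x| ≤ C₀) :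
    ∀ P : Finset (Fin p),
      |cost π P f - cost π P f₀| ≤
        4 * C₀ * Real.sqrt (∫ x, |f x - f₀ x| ^ 2 ∂π) := by
  intro P
  unfold cost
  by_cases hP : P = ∅
  · simp only [hP, if_true, sub_self, abs_zero]
    positivity
  simp only [hP, if_false]
  have hm : coordSubAlg p P ≤ MeasurableSpace.pi := by
    unfold coordSubAlg
    apply Measurable.comap_le
    fun_prop
  have hfi : Integrable f π :=
    Integrable.of_bound hf.aestronglyMeasurable C₀ (Filter.Eventually.of_forall hfb)
  have hf₀i : Integrable f₀ π :=
    Integrable.of_bound hf₀.aestronglyMeasurable C₀ (Filter.Eventually.of_forall hf₀b)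
  have hdi : Integrable (fun x => |f x - f₀ x|) π := (hfi.sub hf₀i).abs
  have hd2 : Integrable (fun x => |f x - f₀ x| ^ 2) π := by
    refine Integrable.of_bound (by fun_prop) ((2 * C₀) ^ 2) (Filter.Eventually.of_forall fun x => ?_)
    rw [Real.norm_eq_abs, abs_of_nonneg (by positivity)]
    have := abs_sub (f x) (f₀ x)
    gcongr
    linarith [hfb x, hf₀b x]
  -- the L¹ distance is at most the L² distance
  set D := ∫ x, |f x - f₀ x| ∂π with hD
  have hDS : D ≤ Real.sqrt (∫ x, |f x - f₀ x| ^ 2 ∂π) := by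
    apply Real.le_sqrt_of_sq_le
    have h : 0 ≤ ∫ x, (|f x - f₀ x| - D) ^ 2 ∂π := integral_nonneg fun x => sq_nonneg _
    have e : ∫ x, (|f x - f₀ x| - D) ^ 2 ∂π
        = (∫ x, |f x - f₀ x| ^ 2 ∂π) - D ^ 2 := by
      have : ∀ x, (|f x - f₀ x| - D) ^ 2
          = |f x - f₀ x| ^ 2 - (2 * D) * |f x - f₀ x| + D ^ 2 := fun x => by ring
      simp_rw [this]
      have hs : Integrable (fun x => |f x - f₀ x| ^ 2 - (2 * D) * |f x - f₀ x|) π :=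
        hd2.sub (hdi.const_mul _)
      rw [integral_add hs (integrable_const _),
        integral_sub hd2 (hdi.const_mul _), integral_const_mul, ← hD]
      simp
      ring
    linarith
  -- conditional expectations
  have bdd : ∀ g : UnitCube p → ℝ, (∀ x, |g x| ≤ C₀) →
      ∀ᵐ x ∂π, |(π[g | coordSubAlg p P]) x| ≤ C₀ := fun g hg =>
    ae_bdd_abs_condExp_of_ae_bdd_abs (Filter.Eventually.of_forall hg)
  have sqi : ∀ g : UnitCube p → ℝ, (∀ x, |g x| ≤ C₀) →
      Integrable (fun x => ((π[g | coordSubAlg p P]) x) ^ 2) π := fun g hg => by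
    refine Integrable.of_bound (integrable_condExp.aestronglyMeasurable.pow 2) (C₀ ^ 2) ?_
    filter_upwards [bdd g hg] with x hx
    rw [Real.norm_eq_abs, abs_pow]
    gcongr
  have h1 : |(∫ x, ((π[f | coordSubAlg p P]) x) ^ 2 ∂π)
      - ∫ x, ((π[f₀ | coordSubAlg p P]) x) ^ 2 ∂π| ≤ 2 * C₀ * D := by
    rw [← integral_sub (sqi f hfb) (sqi f₀ hf₀b)]
    calc _ ≤ ∫ x, |((π[f | coordSubAlg p P]) x) ^ 2 - ((π[f₀ | coordSubAlg p P]) x) ^ 2| ∂π :=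
          abs_integral_le_integral_abs
      _ ≤ ∫ x, 2 * C₀ * |(π[f - f₀ | coordSubAlg p P]) x| ∂π := by
          refine integral_mono_ae ((sqi f hfb).sub (sqi f₀ hf₀b)).abs
            (integrable_condExp.abs.const_mul _) ?_
          filter_upwards [bdd f hfb, bdd f₀ hf₀b, condExp_sub hfi hf₀i (coordSubAlg p P)]
            with x hx hx0 hs
          rw [hs, Pi.sub_apply, sq_sub_sq, abs_mul]
          gcongr
          exact (abs_add_le _ _).trans (by linarith)
      _ = 2 * C₀ * ∫ x, |(π[f - f₀ | coordSubAlg p P]) x| ∂π := integral_const_mul _ _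
      _ ≤ 2 * C₀ * D := by
          gcongr
          exact integral_abs_condExp_le (f - f₀)
  have ib : ∀ g : UnitCube p → ℝ, (∀ x, |g x| ≤ C₀) → |∫ x, g x ∂π| ≤ C₀ := fun g hg => by
    simpa using norm_integral_le_of_norm_le_const (μ := π) (f := g) (C := C₀)
      (Filter.Eventually.of_forall hg)
  have h2 : |(∫ x, f x ∂π) ^ 2 - (∫ x, f₀ x ∂π) ^ 2| ≤ 2 * C₀ * D := by
    rw [sq_sub_sq, abs_mul]
    have a1 : |(∫ x, f x ∂π) - ∫ x, f₀ x ∂π| ≤ D := by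
      rw [← integral_sub hfi hf₀i]
      exact abs_integral_le_integral_abs
    gcongr
    exact (abs_add_le _ _).trans (by linarith [ib f hfb, ib f₀ hf₀b])
  have h3 : 4 * C₀ * D ≤ 4 * C₀ * Real.sqrt (∫ x, |f x - f₀ x| ^ 2 ∂π) := by gcongr
  rw [abs_le] at h1 h2 ⊢
  constructor <;> linarith [h1.1, h1.2, h2.1, h2.2]
end

section
/- Let π be a probability measure on [0,1]^p, let C₀* > 0, and let f, f₀ : [0,1]^p → ℝ be measurable functions with ‖f‖_∞ ≤ C₀* and ‖f₀‖_∞ ≤ C₀*. Then for every j ∈ {1,…,p}, the Shapley effects satisfy |S_{j,π}(f) − S_{j,π}(f₀)| ≤ 8C₀* · ‖f − f₀‖_{L²(π)}. -/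
open MeasureTheory Finset

/-- The `j`-th Shapley effect
`S_{j,π}(g) = (p!)⁻¹ ∑_{P ⊆ [p]\{j}} (p - |P| - 1)! |P|! [c_{P∪{j},π}(g) - c_{P,π}(g)]`. -/
noncomputable def shapleyEffect {p : ℕ} (π : Measure (UnitCube p)) (j : Fin p)
    (g : UnitCube p → ℝ) : ℝ :=
  ((p.factorial : ℝ))⁻¹ *
    ∑ P ∈ (Finset.univ.erase j).powerset,
      ((p - P.card - 1).factorial : ℝ) * (P.card.factorial : ℝ) *
        (cost π (insert j P) g - cost π P g)

lemma cost_lip {p : ℕ} (π : Measure (UnitCube p)) [IsProbabilityMeasure π]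
    (C₀ : ℝ) (hC₀ : 0 < C₀)
    (f f₀ : UnitCube p → ℝ) (hf : Measurable f) (hf₀ : Measurable f₀)
    (hfb : ∀ x, |f x| ≤ C₀) (hf₀b : ∀ x, |f₀ x| ≤ C₀) (P : Finset (Fin p)) :
    |cost π P f - cost π P f₀| ≤ 4 * C₀ * ∫ x, |f x - f₀ x| ∂π := by
  have hI : 0 ≤ ∫ x, |f x - f₀ x| ∂π := integral_nonneg fun x => abs_nonneg _
  unfold cost
  split_ifs with h
  · simp only [sub_self, abs_zero]; positivity
  have hm : coordSubAlg p P ≤ MeasurableSpace.pi := by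
    apply Measurable.comap_le
    fun_prop
  have key : ∀ g : UnitCube p → ℝ, Measurable g → (∀ x, |g x| ≤ C₀) → Integrable g π :=
    fun g hg hb => Integrable.of_bound hg.aestronglyMeasurable C₀
      (Filter.Eventually.of_forall hb)
  have if1 := key f hf hfb
  have if0 := key f₀ hf₀ hf₀b
  set m := coordSubAlg p P
  have bd : ∀ g : UnitCube p → ℝ, (∀ x, |g x| ≤ C₀) → ∀ᵐ x ∂π, |(π[g | m]) x| ≤ C₀ := by
    intro g hb
    have := ae_bdd_condExp_of_ae_bdd (m := m) (μ := π) (f := g) (R := ⟨C₀, hC₀.le⟩)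
      (Filter.Eventually.of_forall hb)
    exact this
  have b1 := bd f hfb
  have b0 := bd f₀ hf₀b
  have sq : ∀ g : UnitCube p → ℝ, (∀ᵐ x ∂π, |(π[g | m]) x| ≤ C₀) →
      Integrable (fun x => ((π[g | m]) x) ^ 2) π := by
    intro g hg
    refine Integrable.of_bound (integrable_condExp.aestronglyMeasurable.pow 2) (C₀ ^ 2) ?_
    filter_upwards [hg] with x hx
    rw [Real.norm_eq_abs, abs_pow]
    gcongr
  have e1 : |(∫ x, ((π[f | m]) x) ^ 2 ∂π) - ∫ x, ((π[f₀ | m]) x) ^ 2 ∂π|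
      ≤ 2 * C₀ * ∫ x, |f x - f₀ x| ∂π := by
    rw [← integral_sub (sq f b1) (sq f₀ b0)]
    calc _ ≤ ∫ x, |((π[f | m]) x) ^ 2 - ((π[f₀ | m]) x) ^ 2| ∂π := abs_integral_le_integral_abs
      _ ≤ ∫ x, 2 * C₀ * |(π[f - f₀ | m]) x| ∂π := by
        apply integral_mono_ae ((sq f b1).sub (sq f₀ b0)).abs
          (integrable_condExp.abs.const_mul _)
        filter_upwards [b1, b0, condExp_sub if1 if0 m] with x h1 h0 hs
        rw [hs]
        simp only [Pi.sub_apply]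
        rw [sq_sub_sq, abs_mul]
        gcongr
        exact (abs_add_le _ _).trans (by linarith)
      _ = 2 * C₀ * ∫ x, |(π[f - f₀ | m]) x| ∂π := integral_const_mul _ _
      _ ≤ _ := by
        refine mul_le_mul_of_nonneg_left ?_ (by positivity)
        exact integral_abs_condExp_le (f - f₀)
  have bi : ∀ g : UnitCube p → ℝ, (∀ x, |g x| ≤ C₀) → |∫ x, g x ∂π| ≤ C₀ := by
    intro g hb
    have := norm_integral_le_of_norm_le_const (μ := π) (f := g) (Filter.Eventually.of_forall hb)
    simpa using this
  have e2 : |(∫ x, f x ∂π) ^ 2 - (∫ x, f₀ x ∂π) ^ 2| ≤ 2 * C₀ * ∫ x, |f x - f₀ x| ∂π := by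
    rw [sq_sub_sq, abs_mul]
    have h1 := bi f hfb
    have h0 := bi f₀ hf₀b
    gcongr
    · exact (abs_add_le _ _).trans (by linarith)
    · rw [← integral_sub if1 if0]; exact abs_integral_le_integral_abs
  rw [abs_le] at *
  constructor <;> linarith [e1.1, e1.2, e2.1, e2.2]

lemma weight_sum {p : ℕ} (j : Fin p) :
    ∑ P ∈ (Finset.univ.erase j).powerset,
      ((p - P.card - 1).factorial : ℝ) * (P.card.factorial : ℝ) = p.factorial := by
  obtain ⟨n, rfl⟩ : ∃ n, p = n + 1 := ⟨p - 1, by have := j.pos; omega⟩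
  rw [Finset.sum_powerset_apply_card
    (fun k => ((n + 1 - k - 1).factorial : ℝ) * (k.factorial : ℝ))]
  have hc : (Finset.univ.erase j).card = n := by simp
  rw [hc]
  have : ∀ k ∈ Finset.range (n + 1), n.choose k •
      (((n + 1 - k - 1).factorial : ℝ) * (k.factorial : ℝ)) = n.factorial := by
    intro k hk
    have hk' : k ≤ n := by simpa [Nat.lt_succ_iff] using hk
    have e : n + 1 - k - 1 = n - k := by omega
    rw [e, nsmul_eq_mul, ← Nat.choose_mul_factorial_mul_factorial hk']
    push_cast
    ring
  rw [Finset.sum_congr rfl this]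
  simp [Nat.factorial_succ]


/-- If `f, f₀ : [0,1]^p → ℝ` are measurable and bounded in supremum norm by
`C₀* > 0`, then for every `j`, `|S_{j,π}(f) - S_{j,π}(f₀)| ≤ 8 C₀* ‖f - f₀‖_{L²(π)}`. -/
theorem stmt8 {p : ℕ} (π : Measure (UnitCube p)) [IsProbabilityMeasure π]
    (C₀ : ℝ) (hC₀ : 0 < C₀)
    (f f₀ : UnitCube p → ℝ) (hf : Measurable f) (hf₀ : Measurable f₀)
    (hfb : ∀ x, |f x| ≤ C₀) (hf₀b : ∀ x, |f₀ x| ≤ C₀) :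
    ∀ j : Fin p,
      |shapleyEffect π j f - shapleyEffect π j f₀| ≤
        8 * C₀ * Real.sqrt (∫ x, |f x - f₀ x| ^ 2 ∂π) := by

  intro j
  set D := Real.sqrt (∫ x, |f x - f₀ x| ^ 2 ∂π) with hD
  have hL : ∫ x, |f x - f₀ x| ∂π ≤ D := by
    apply Real.le_sqrt_of_sq_le
    have hm : MemLp (fun x => |f x - f₀ x|) 2 π := by
      refine MemLp.of_bound (hf.sub hf₀).abs.aestronglyMeasurable (2 * C₀)
        (Filter.Eventually.of_forall fun x => ?_)
      rw [Real.norm_eq_abs, abs_abs]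
      exact (abs_sub _ _).trans (by linarith [hfb x, hf₀b x])
    have hv := ProbabilityTheory.variance_nonneg (fun x => |f x - f₀ x|) π
    rw [ProbabilityTheory.variance_eq_sub hm] at hv
    simpa using hv
  have hc : ∀ P : Finset (Fin p), |cost π P f - cost π P f₀| ≤ 4 * C₀ * D := fun P =>
    (cost_lip π C₀ hC₀ f f₀ hf hf₀ hfb hf₀b P).trans (by gcongr)
  unfold shapleyEffect
  rw [← mul_sub, ← Finset.sum_sub_distrib, abs_mul, abs_of_nonneg (by positivity)]
  have hs : |∑ P ∈ (Finset.univ.erase j).powerset,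
      (((p - P.card - 1).factorial : ℝ) * (P.card.factorial : ℝ) *
        (cost π (insert j P) f - cost π P f) -
      ((p - P.card - 1).factorial : ℝ) * (P.card.factorial : ℝ) *
        (cost π (insert j P) f₀ - cost π P f₀))| ≤ p.factorial * (8 * C₀ * D) := by
    rw [← weight_sum j, Finset.sum_mul]
    refine (Finset.abs_sum_le_sum_abs _ _).trans (Finset.sum_le_sum fun P _ => ?_)
    rw [← mul_sub, abs_mul, abs_of_nonneg (by positivity)]
    gcongr
    have h1 := abs_le.1 (hc (insert j P))
    have h2 := abs_le.1 (hc P)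
    rw [abs_le]
    constructor <;> linarith [h1.1, h1.2, h2.1, h2.2]
  have hp : (0 : ℝ) < p.factorial := by positivity
  rw [inv_mul_le_iff₀ hp]
  exact hs
end

section
/- Let π be a probability measure on [0,1]^p, let C₀* > 0, and let f, f₀ : [0,1]^p → ℝ be measurable functions with ‖f‖_∞ ≤ C₀* and ‖f₀‖_∞ ≤ C₀*. Then for every nonempty subset P ⊆ {1,…,p}, the generalized main-effect Sobol' indices satisfy |V_{P,π}(f) − V_{P,π}(f₀)| ≤ (2^{|P|} − 1) · 4C₀* · ‖f − f₀‖_{L²(π)}. -/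
open MeasureTheory Finset

/-- The generalized main-effect Sobol' index, via Möbius inversion:
`V_{P,π}(g) = ∑_{Q ⊆ P} (-1)^{|P| - |Q|} c_{Q,π}(g)`
(equivalent to the recursive definition `V_{P,π}(g) = c_{P,π}(g) - ∑_{Q ⊊ P} V_{Q,π}(g)`,
`V_{∅,π}(g) = 0`). -/
noncomputable def sobolV {p : ℕ} (π : Measure (UnitCube p)) (P : Finset (Fin p))
    (g : UnitCube p → ℝ) : ℝ :=
  ∑ Q ∈ P.powerset, (-1 : ℝ) ^ (P.card - Q.card) * cost π Q g

lemma aux_cost {p : ℕ} (π : Measure (UnitCube p)) [IsProbabilityMeasure π]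
    (C₀ : ℝ) (hC₀ : 0 < C₀)
    (f f₀ : UnitCube p → ℝ) (hf : Measurable f) (hf₀ : Measurable f₀)
    (hfb : ∀ x, |f x| ≤ C₀) (hf₀b : ∀ x, |f₀ x| ≤ C₀) (Q : Finset (Fin p)) :
    |cost π Q f - cost π Q f₀| ≤
      if Q = ∅ then 0 else (4 * C₀) * Real.sqrt (∫ x, |f x - f₀ x| ^ 2 ∂π) := by
  unfold cost
  split_ifs with hQ
  · simp
  have hfi : Integrable f π := Integrable.of_bound hf.aestronglyMeasurable C₀
    (Filter.Eventually.of_forall hfb)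
  have hf₀i : Integrable f₀ π := Integrable.of_bound hf₀.aestronglyMeasurable C₀
    (Filter.Eventually.of_forall hf₀b)
  set m := coordSubAlg p Q
  set g := π[f | m] with hg
  set g₀ := π[f₀ | m] with hg₀
  have hgi : Integrable g π := integrable_condExp
  have hg₀i : Integrable g₀ π := integrable_condExp
  have hgb : ∀ᵐ x ∂π, |g x| ≤ C₀ :=
    ae_bdd_condExp_of_ae_bdd (R := ⟨C₀, hC₀.le⟩) (Filter.Eventually.of_forall hfb)
  have hg₀b : ∀ᵐ x ∂π, |g₀ x| ≤ C₀ :=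
    ae_bdd_condExp_of_ae_bdd (R := ⟨C₀, hC₀.le⟩) (Filter.Eventually.of_forall hf₀b)
  have sqi : ∀ h : UnitCube p → ℝ, Integrable h π → (∀ᵐ x ∂π, |h x| ≤ C₀) →
      Integrable (fun x => h x ^ 2) π := by
    intro h hi hb
    refine Integrable.of_bound (hi.aestronglyMeasurable.pow 2) (C₀ ^ 2) ?_
    filter_upwards [hb] with x hx
    rw [Real.norm_eq_abs, abs_pow]
    gcongr
  have hL : ∫ x, |g x - g₀ x| ∂π ≤ ∫ x, |f x - f₀ x| ∂π := by
    have h1 := integral_abs_condExp_le (μ := π) (m := m) (f - f₀)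
    refine le_trans (le_of_eq ?_) h1
    apply integral_congr_ae
    filter_upwards [condExp_sub hfi hf₀i m] with x hx
    rw [hx]; rfl
  have hD : ∫ x, |f x - f₀ x| ∂π ≤ Real.sqrt (∫ x, |f x - f₀ x| ^ 2 ∂π) := by
    apply Real.le_sqrt_of_sq_le
    have hb : MemLp (fun x => |f x - f₀ x|) 2 π := by
      refine MemLp.of_bound (hfi.sub hf₀i).abs.aestronglyMeasurable (2 * C₀)
        (Filter.Eventually.of_forall fun x => ?_)
      rw [Real.norm_eq_abs, abs_abs]
      have := abs_sub (f x) (f₀ x)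
      linarith [hfb x, hf₀b x]
    have h1 := ProbabilityTheory.variance_eq_sub hb
    have h2 := ProbabilityTheory.variance_nonneg (fun x => |f x - f₀ x|) π
    simp only [Pi.pow_apply] at h1
    linarith
  have hA : |(∫ x, g x ^ 2 ∂π) - ∫ x, g₀ x ^ 2 ∂π| ≤ 2 * C₀ * ∫ x, |f x - f₀ x| ∂π := by
    rw [← integral_sub (sqi g hgi hgb) (sqi g₀ hg₀i hg₀b)]
    refine (abs_integral_le_integral_abs).trans ?_
    refine le_trans ?_ (mul_le_mul_of_nonneg_left hL (by positivity))
    rw [← integral_const_mul]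
    refine integral_mono_ae ((sqi g hgi hgb).sub (sqi g₀ hg₀i hg₀b)).abs
      ((hgi.sub hg₀i).abs.const_mul _) ?_
    filter_upwards [hgb, hg₀b] with x h1 h2
    rw [sq_sub_sq, abs_mul]
    have := abs_add_le (g x) (g₀ x)
    exact mul_le_mul_of_nonneg_right (by linarith) (abs_nonneg _)
  have hm : ∀ h : UnitCube p → ℝ, (∀ x, |h x| ≤ C₀) → |∫ x, h x ∂π| ≤ C₀ := by
    intro h hb
    have := norm_integral_le_of_norm_le_const (μ := π) (f := h) (C := C₀)
      (Filter.Eventually.of_forall hb)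
    simpa using this
  have hB : |(∫ x, f x ∂π) ^ 2 - (∫ x, f₀ x ∂π) ^ 2| ≤ 2 * C₀ * ∫ x, |f x - f₀ x| ∂π := by
    rw [sq_sub_sq, abs_mul, ← integral_sub hfi hf₀i]
    refine mul_le_mul ?_ abs_integral_le_integral_abs (abs_nonneg _) (by positivity)
    have := abs_add_le (∫ x, f x ∂π) (∫ x, f₀ x ∂π)
    linarith [hm f hfb, hm f₀ hf₀b]
  have hD' := mul_le_mul_of_nonneg_left hD (show 0 ≤ 4 * C₀ by positivity)
  rw [abs_le] at *
  constructor <;> linarith [hA.1, hA.2, hB.1, hB.2]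

/-- If `f, f₀ : [0,1]^p → ℝ` are measurable and bounded in supremum norm by
`C₀* > 0`, then for every nonempty `P ⊆ [p]`,
`|V_{P,π}(f) - V_{P,π}(f₀)| ≤ (2^{|P|} - 1) · 4 C₀* · ‖f - f₀‖_{L²(π)}`. -/
theorem stmt9 {p : ℕ} (π : Measure (UnitCube p)) [IsProbabilityMeasure π]
    (C₀ : ℝ) (hC₀ : 0 < C₀)
    (f f₀ : UnitCube p → ℝ) (hf : Measurable f) (hf₀ : Measurable f₀)
    (hfb : ∀ x, |f x| ≤ C₀) (hf₀b : ∀ x, |f₀ x| ≤ C₀) :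
    ∀ P : Finset (Fin p), P.Nonempty →
      |sobolV π P f - sobolV π P f₀| ≤
        ((2 : ℝ) ^ P.card - 1) * (4 * C₀) * Real.sqrt (∫ x, |f x - f₀ x| ^ 2 ∂π) := by
  intro P hP
  unfold sobolV
  rw [← Finset.sum_sub_distrib]
  refine (Finset.abs_sum_le_sum_abs _ _).trans ?_
  have h : ∀ Q ∈ P.powerset, |(-1 : ℝ) ^ (P.card - Q.card) * cost π Q f -
      (-1 : ℝ) ^ (P.card - Q.card) * cost π Q f₀| ≤
      if Q = ∅ then 0 else (4 * C₀) * Real.sqrt (∫ x, |f x - f₀ x| ^ 2 ∂π) := by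
    intro Q _
    rw [← mul_sub, abs_mul, abs_pow, abs_neg, abs_one, one_pow, one_mul]
    exact aux_cost π C₀ hC₀ f f₀ hf hf₀ hfb hf₀b Q
  refine (Finset.sum_le_sum h).trans (le_of_eq ?_)
  rw [← Finset.add_sum_erase _ _ (Finset.empty_mem_powerset P), if_pos rfl, zero_add]
  rw [Finset.sum_congr rfl (fun Q hQ => if_neg (Finset.ne_of_mem_erase hQ))]
  rw [Finset.sum_const, Finset.card_erase_of_mem (Finset.empty_mem_powerset P),
    Finset.card_powerset, nsmul_eq_mul, Nat.cast_sub Nat.one_le_two_pow]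
  push_cast
  ring
end

section
/- Let π be a probability measure on [0,1]^p, let C₀* > 0, and let f, f₀ : [0,1]^p → ℝ be measurable functions with ‖f‖_∞ ≤ C₀* and ‖f₀‖_∞ ≤ C₀*. Then for every j ∈ {1,…,p}, the generalized total-effect Sobol' indices satisfy |T_{j,π}(f) − T_{j,π}(f₀)| ≤ 4C₀* · (Σ_{i=0}^{p−1} C(p−1, i)(2^{i+1} − 1)) · ‖f − f₀‖_{L²(π)}, where C(p−1, i) is the binomial coefficient. -/
open MeasureTheory Finset

/-- The `j`-th generalized total-effect Sobol' index
`T_{j,π}(g) = ∑_{P ⊆ [p]\{j}} V_{P∪{j},π}(g)`. -/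
noncomputable def sobolT {p : ℕ} (π : Measure (UnitCube p)) (j : Fin p)
    (g : UnitCube p → ℝ) : ℝ :=
  ∑ P ∈ (Finset.univ.erase j).powerset, sobolV π (insert j P) g

lemma coordSubAlg_le (p : ℕ) (P : Finset (Fin p)) :
    coordSubAlg p P ≤ (MeasurableSpace.pi : MeasurableSpace (UnitCube p)) := by
  unfold coordSubAlg
  apply Measurable.comap_le
  exact measurable_pi_lambda _ (fun i => measurable_pi_apply _)

lemma integral_abs_le_sqrt {p : ℕ} (π : Measure (UnitCube p)) [IsProbabilityMeasure π]
    (h : UnitCube p → ℝ) (hi : Integrable h π) (hi2 : Integrable (fun x => |h x| ^ 2) π) :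
    ∫ x, |h x| ∂π ≤ Real.sqrt (∫ x, |h x| ^ 2 ∂π) := by
  apply Real.le_sqrt_of_sq_le
  set D := ∫ x, |h x| ∂π with hD
  have h0 : 0 ≤ ∫ x, (|h x| - D) ^ 2 ∂π := integral_nonneg (fun x => sq_nonneg _)
  have e : ∫ x, (|h x| - D) ^ 2 ∂π = ∫ x, ((|h x| ^ 2 - (2 * D) * |h x|) + D ^ 2) ∂π := by
    congr 1; ext x; ring
  have i1 : Integrable (fun x => (2 * D) * |h x|) π := hi.abs.const_mul _
  have i2 : Integrable (fun x => |h x| ^ 2 - (2 * D) * |h x|) π := hi2.sub i1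
  rw [e, integral_add i2 (integrable_const _), integral_sub hi2 i1,
    integral_const_mul, ← hD] at h0
  simp at h0
  simp only [sq_abs]
  nlinarith

lemma cost_diff {p : ℕ} (π : Measure (UnitCube p)) [IsProbabilityMeasure π]
    (C₀ : ℝ) (hC₀ : 0 < C₀)
    (f f₀ : UnitCube p → ℝ) (hf : Measurable f) (hf₀ : Measurable f₀)
    (hfb : ∀ x, |f x| ≤ C₀) (hf₀b : ∀ x, |f₀ x| ≤ C₀) (P : Finset (Fin p)) :
    |cost π P f - cost π P f₀| ≤
      if P = ∅ then 0 else 4 * C₀ * Real.sqrt (∫ x, |f x - f₀ x| ^ 2 ∂π) := by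
  unfold cost
  split_ifs with hP
  · simp
  have hm := coordSubAlg_le p P
  generalize coordSubAlg p P = m at hm ⊢
  have fi : Integrable f π := Integrable.of_bound hf.aestronglyMeasurable C₀
    (Filter.Eventually.of_forall hfb)
  have fi₀ : Integrable f₀ π := Integrable.of_bound hf₀.aestronglyMeasurable C₀
    (Filter.Eventually.of_forall hf₀b)
  have di : Integrable (fun x => f x - f₀ x) π := fi.sub fi₀
  have di2 : Integrable (fun x => |f x - f₀ x| ^ 2) π := by
    refine Integrable.of_bound (C := (2 * C₀) ^ 2) (by fun_prop) (Filter.Eventually.of_forall ?_)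
    intro x
    rw [Real.norm_eq_abs, abs_of_nonneg (by positivity)]
    have := abs_sub (f x) (f₀ x)
    have := hfb x
    have := hf₀b x
    gcongr
    linarith
  have hD := integral_abs_le_sqrt π _ di di2
  set S := Real.sqrt (∫ x, |f x - f₀ x| ^ 2 ∂π)
  set D := ∫ x, |f x - f₀ x| ∂π with hDdef
  have bd : ∀ᵐ x ∂π, |(π[f | m]) x| ≤ C₀ :=
    ae_bdd_condExp_of_ae_bdd (R := ⟨C₀, hC₀.le⟩) (Filter.Eventually.of_forall hfb)
  have bd₀ : ∀ᵐ x ∂π, |(π[f₀ | m]) x| ≤ C₀ :=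
    ae_bdd_condExp_of_ae_bdd (R := ⟨C₀, hC₀.le⟩) (Filter.Eventually.of_forall hf₀b)
  have sqi : ∀ g : UnitCube p → ℝ, (∀ᵐ x ∂π, |(π[g | m]) x| ≤ C₀) →
      Integrable (fun x => ((π[g | m]) x) ^ 2) π := by
    intro g hg
    refine Integrable.of_bound (C := C₀ ^ 2)
      ((integrable_condExp (m := m)).aestronglyMeasurable.pow 2) ?_
    filter_upwards [hg] with x hx
    rw [norm_pow, Real.norm_eq_abs]
    gcongr
  have h1 : |(∫ x, ((π[f | m]) x) ^ 2 ∂π) - ∫ x, ((π[f₀ | m]) x) ^ 2 ∂π| ≤ 2 * C₀ * D := by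
    rw [← integral_sub (sqi f bd) (sqi f₀ bd₀)]
    refine (abs_integral_le_integral_abs).trans ?_
    have : ∫ x, |((π[f | m]) x) ^ 2 - ((π[f₀ | m]) x) ^ 2| ∂π
        ≤ ∫ x, 2 * C₀ * |(π[f - f₀ | m]) x| ∂π := by
      apply integral_mono_ae ((sqi f bd).sub (sqi f₀ bd₀)).abs
        ((integrable_condExp (m := m)).abs.const_mul _)
      filter_upwards [bd, bd₀, condExp_sub fi fi₀ m] with x a b c
      have c2 : (π[f - f₀ | m]) x = (π[f | m]) x - (π[f₀ | m]) x := c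
      show |((π[f | m]) x) ^ 2 - ((π[f₀ | m]) x) ^ 2| ≤ 2 * C₀ * |(π[f - f₀ | m]) x|
      rw [c2, sq_sub_sq, abs_mul]
      gcongr
      exact (abs_add_le _ _).trans (by linarith)
    refine this.trans ?_
    rw [integral_const_mul]
    gcongr
    exact integral_abs_condExp_le (f - f₀)
  have h2 : |(∫ x, f x ∂π) ^ 2 - (∫ x, f₀ x ∂π) ^ 2| ≤ 2 * C₀ * D := by
    have ib : ∀ g : UnitCube p → ℝ, (∀ x, |g x| ≤ C₀) → |∫ x, g x ∂π| ≤ C₀ := by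
      intro g hg
      have := norm_integral_le_of_norm_le_const (μ := π) (f := g) (C := C₀)
        (Filter.Eventually.of_forall hg)
      simpa using this
    rw [sq_sub_sq, abs_mul, ← integral_sub fi fi₀]
    gcongr
    · exact (abs_add_le _ _).trans (by linarith [ib f hfb, ib f₀ hf₀b])
    · exact abs_integral_le_integral_abs
  have h3 : 2 * C₀ * D ≤ 2 * C₀ * S := by gcongr
  rw [abs_le] at h1 h2 ⊢
  constructor <;> linarith [h1.1, h1.2, h2.1, h2.2]

theorem stmt10 {p : ℕ} (π : Measure (UnitCube p)) [IsProbabilityMeasure π]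
    (C₀ : ℝ) (hC₀ : 0 < C₀)
    (f f₀ : UnitCube p → ℝ) (hf : Measurable f) (hf₀ : Measurable f₀)
    (hfb : ∀ x, |f x| ≤ C₀) (hf₀b : ∀ x, |f₀ x| ≤ C₀) :
    ∀ j : Fin p,
      |sobolT π j f - sobolT π j f₀| ≤
        4 * C₀ * (∑ i ∈ Finset.range p, ((p - 1).choose i : ℝ) * ((2 : ℝ) ^ (i + 1) - 1)) *
          Real.sqrt (∫ x, |f x - f₀ x| ^ 2 ∂π) := by
  intro j
  have hc := cost_diff π C₀ hC₀ f f₀ hf hf₀ hfb hf₀b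
  set S := Real.sqrt (∫ x, |f x - f₀ x| ^ 2 ∂π)
  have hV : ∀ P : Finset (Fin p), |sobolV π P f - sobolV π P f₀| ≤
      ((2 : ℝ) ^ P.card - 1) * (4 * C₀ * S) := by
    intro P
    unfold sobolV
    rw [← Finset.sum_sub_distrib]
    refine (Finset.abs_sum_le_sum_abs _ _).trans ?_
    calc _ ≤ ∑ Q ∈ P.powerset, (4 * C₀ * S - if Q = ∅ then 4 * C₀ * S else 0) := by
          apply Finset.sum_le_sum
          intro Q _
          rw [← mul_sub, abs_mul, abs_pow, abs_neg, abs_one, one_pow, one_mul]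
          refine (hc Q).trans (le_of_eq ?_)
          split_ifs <;> simp
      _ = _ := by
          rw [Finset.sum_sub_distrib, Finset.sum_ite_eq']
          simp
          ring
  have hp : 0 < p := j.pos
  have hcard : (Finset.univ.erase j).card = p - 1 := by simp
  have hsum := Finset.sum_powerset_apply_card (fun i => ((2 : ℝ) ^ (i + 1) - 1))
    (x := Finset.univ.erase j)
  rw [hcard, Nat.sub_add_cancel hp] at hsum
  simp only [nsmul_eq_mul] at hsum
  rw [← hsum]
  unfold sobolT
  rw [← Finset.sum_sub_distrib]
  refine (Finset.abs_sum_le_sum_abs _ _).trans ?_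
  rw [mul_right_comm, mul_comm, Finset.sum_mul]
  apply Finset.sum_le_sum
  intro P hP
  have hj : j ∉ P := fun h => by simpa using Finset.mem_powerset.1 hP h
  have := hV (insert j P)
  rwa [Finset.card_insert_of_notMem hj] at this
end
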